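/- Let b ≥ 2 and let B_0,…,B_{b−2} ∈ S satisfy ν(B_i) ≥ b−i for all i (that is, B_i ∈ m^{b−i}), with not all B_i zero. Then the order at the closed point of the differential closure G_X^{(d)} := Diff_S(S[B_{b−2}W^2, B_{b−3}W^3, …, B_0W^b]) equals the minimum over i (with B_i ≠ 0) of ν(B_i)/(b−i): ord(G_X^{(d)}) = min_i ν(B_i)/(b−i). -/

import Mathlib

open Polynomial
open scoped ENNReal

noncomputable section

namespace NashMult

/-- The `m`-adic order `ν(f)` of an element `f` of a ring: the largest `n` with `f ∈ m ^ n`. -/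
def adicOrder {R : Type*} [CommRing R] (m : Ideal R) (f : R) : ℕ :=
  sSup {n : ℕ | f ∈ m ^ n}

/-- A subalgebra `G ⊆ R[W]` is *graded* if it is spanned by its "monomials", i.e. it is closed
under taking homogeneous components.  This is the condition expressing that `G = ⊕ I_l W^l`
for a family of ideals `I_l` (with `I_0 = R` and `I_i · I_j ⊆ I_{i+j}` automatic). -/
def Graded {R : Type*} [CommRing R] (G : Subalgebra R (Polynomial R)) : Prop :=
  ∀ p ∈ G, ∀ n : ℕ, (C (p.coeff n) * X ^ n : Polynomial R) ∈ G

/-- A *Rees algebra* over `R`: a finitely generated graded subalgebra of `R[W]`. -/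
def IsReesAlgebra {R : Type*} [CommRing R] (G : Subalgebra R (Polynomial R)) : Prop :=
  G.FG ∧ Graded G

/-- The order of (the Rees algebra) `G` at the closed point of the local ring `(R, m)`:
`ord(G) = inf { ν(f)/n : f W^n a homogeneous element of G, n ≥ 1, f ≠ 0 }`
(with value `∞` for the empty infimum). -/
def reesOrder {R : Type*} [CommRing R] (m : Ideal R) (G : Subalgebra R (Polynomial R)) : ℝ≥0∞ :=
  sInf {q : ℝ≥0∞ | ∃ (f : R) (n : ℕ), f ≠ 0 ∧ 1 ≤ n ∧ (C f * X ^ n : Polynomial R) ∈ G ∧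
    q = (adicOrder m f : ℝ≥0∞) / (n : ℝ≥0∞)}

/-- `G = ⊕ I_l W^l` is *differentially closed* relative to a family `D` of derivations if
`I_{l+1} ⊆ I_l` and `D_j (I_l) ⊆ I_{l-1}` for all `l ≥ 1` and all `j`. -/
def DiffClosed {k R ι : Type*} [CommRing k] [CommRing R] [Algebra k R]
    (D : ι → Derivation k R R) (G : Subalgebra R (Polynomial R)) : Prop :=
  (∀ (f : R) (l : ℕ), 1 ≤ l → (C f * X ^ (l + 1) : Polynomial R) ∈ G →
      (C f * X ^ l : Polynomial R) ∈ G) ∧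
  (∀ (f : R) (l : ℕ) (j : ι), (C f * X ^ (l + 1) : Polynomial R) ∈ G →
      (C (D j f) * X ^ l : Polynomial R) ∈ G)

/-- `Diff(M)`: the smallest graded differentially closed subalgebra of `R[W]` containing the
set `M`. -/
def diffClosure {k R ι : Type*} [CommRing k] [CommRing R] [Algebra k R]
    (D : ι → Derivation k R R) (M : Set (Polynomial R)) : Subalgebra R (Polynomial R) :=
  sInf {G : Subalgebra R (Polynomial R) | M ⊆ ↑G ∧ Graded G ∧ DiffClosed D G}

/-- The image `ψ(G)` of a Rees algebra `G` over `R` under a homomorphism (arc) `ψ : R → K⟦t⟧`: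
the Rees algebra over `K⟦t⟧` generated by all `ψ(g) W^l` for `g W^l` a homogeneous element of
`G` with `ψ(g) ≠ 0`. -/
def arcImage {R A : Type*} [CommRing R] [CommRing A] (ψ : R → A)
    (G : Subalgebra R (Polynomial R)) : Subalgebra A (Polynomial A) :=
  Algebra.adjoin A {p : Polynomial A | ∃ (g : R) (l : ℕ),
    (C g * X ^ l : Polynomial R) ∈ G ∧ ψ g ≠ 0 ∧ p = C (ψ g) * X ^ l}

/-- The order `ord(ψ)` of an arc `ψ : R → K⟦t⟧`: the largest `n` such that
`ψ(m) ⊆ t^n` (`t` being the ideal `tI`). -/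
def homOrd {R A : Type*} [CommRing R] [CommRing A] (m : Ideal R) (tI : Ideal A)
    (ψ : R → A) : ℕ :=
  sSup {n : ℕ | ∀ s ∈ m, ψ s ∈ tI ^ n}

/-- The maximal ideal `(t)` of `K⟦t⟧`. -/
def tId (K : Type*) [CommRing K] : Ideal (PowerSeries K) :=
  Ideal.span {(PowerSeries.X : PowerSeries K)}

/-- The `t`-adic order on `K⟦t⟧`. -/
def tOrd {K : Type*} [CommRing K] (g : PowerSeries K) : ℕ :=
  adicOrder (tId K) g

/-- The family of ideals `I_l` of the graded algebra `G = ⊕ I_l W^l`. -/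
def idealFam {R : Type*} [CommRing R] (G : Subalgebra R (Polynomial R)) (l : ℕ) : Ideal R :=
  Submodule.comap (Polynomial.monomial l : R →ₗ[R] Polynomial R) (Subalgebra.toSubmodule G)

/-- The closed point of the local ring `(R, m)` belongs to the singular locus of
`G = ⊕ I_l W^l`, i.e. `ν(I_l) ≥ l` for all `l ≥ 1`. -/
def SingFam {R : Type*} [CommRing R] (m : Ideal R) (I : ℕ → Ideal R) : Prop :=
  ∀ l : ℕ, 1 ≤ l → I l ≤ m ^ l

/-- The transform `⊕ (I_l · T^{-l}) W^l` of a Rees algebra `⊕ I_l W^l` over a DVR with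
uniformizer `T` (when the closed point lies in the singular locus, `I_l ⊆ (T^l)` and
`I_l · T^{-l} = (I_l : (T^l))`). -/
def transformFam {R : Type*} [CommRing R] (T : R) (I : ℕ → Ideal R) : ℕ → Ideal R :=
  fun l => (I l).colon (Ideal.span {T ^ l})

/-- The persistance: the least number `κ` of transforms needed so that the closed point no
longer lies in the singular locus. -/
def persist {R : Type*} [CommRing R] (m : Ideal R) (T : R)
    (G : Subalgebra R (Polynomial R)) : ℕ :=
  sInf {κ : ℕ | ¬ SingFam m ((transformFam T)^[κ] (idealFam G))}

/-- The set of elements of a ring integral over a subset `s` (monic equation with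
coefficients in `s`). -/
def intClos {A : Type*} [CommRing A] (s : Set A) : Set A :=
  {p : A | ∃ q : Polynomial A, q.Monic ∧ (∀ n, q.coeff n ∈ s) ∧ Polynomial.eval p q = 0}


/-- The monic polynomial `f = x^b + B_{b-2} x^{b-2} + ⋯ + B_1 x + B_0` with coefficients
`B_j = Bc j` (only `j ≤ b - 2` is relevant). -/
def minPolyOf {S : Type*} [CommRing S] (b : ℕ) (Bc : ℕ → S) : Polynomial S :=
  Polynomial.X ^ b + ∑ j ∈ Finset.range (b - 1), Polynomial.C (Bc j) * Polynomial.X ^ j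


/-- The maximal ideal `(z_1, …, z_d)` of the polynomial ring `k[z_1, …, z_d]`
(the kernel of evaluation at the origin). -/
def mPoly (k : Type) [Field k] (d : ℕ) : Ideal (MvPolynomial (Fin d) k) :=
  RingHom.ker (MvPolynomial.aeval (fun _ => (0 : k)) : MvPolynomial (Fin d) k →ₐ[k] k)

instance {k : Type} [Field k] {d : ℕ} : (mPoly k d).IsMaximal :=
  RingHom.ker_isMaximal_of_surjective _ (fun a => ⟨MvPolynomial.C a, by simp⟩)

instance {k : Type} [Field k] {d : ℕ} : (mPoly k d).IsPrime :=
  (inferInstance : (mPoly k d).IsMaximal).isPrime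

/-- `IsSLoc k d S` says that `S` is (identified with) the localization of `k[z_1, …, z_d]`
at the maximal ideal `(z_1, …, z_d)`. -/
abbrev IsSLoc (k : Type) [Field k] (d : ℕ) (S : Type) [CommRing S]
    [Algebra (MvPolynomial (Fin d) k) S] : Prop :=
  IsLocalization.AtPrime S (mPoly k d)

/-- The element `z_j` of `S`. -/
def zvar (k : Type) [Field k] (d : ℕ) (S : Type) [CommRing S]
    [Algebra (MvPolynomial (Fin d) k) S] (j : Fin d) : S :=
  algebraMap (MvPolynomial (Fin d) k) S (MvPolynomial.X j)

/-- The maximal ideal `m = (z_1, …, z_d)` of the local ring `S`. -/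
def mS (k : Type) [Field k] (d : ℕ) (S : Type) [CommRing S]
    [Algebra (MvPolynomial (Fin d) k) S] : Ideal S :=
  (mPoly k d).map (algebraMap (MvPolynomial (Fin d) k) S)


variable (k : Type) [Field k] (d : ℕ)
variable (S : Type) [CommRing S] [Algebra (MvPolynomial (Fin d) k) S] [Algebra k S]

/-- The elimination algebra `G_X^{(d)} = Diff(S[B_{b-2} W^2, …, B_0 W^b])` over `S` of the
hypersurface `X = V(f)`, where `f = x^b + B_{b-2} x^{b-2} + ⋯ + B_0`. -/
def hypElim (D : Fin d → Derivation k S S) (b : ℕ) (Bc : ℕ → S) :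
    Subalgebra S (Polynomial S) :=
  diffClosure D {p : Polynomial S | ∃ i ≤ b - 2,
    p = Polynomial.C (Bc i) * Polynomial.X ^ (b - i)}

/-- An arc in the hypersurface `X = V(f)` through the closed point `ξ`: a `k`-algebra
homomorphism `φ : S[x] → K⟦t⟧` with `φ(f) = 0` and `φ(x), φ(z_1), …, φ(z_d) ∈ (t)`,
with `φ(x)` and all `φ(z_j)` nonzero. -/
def IsHypArc (b : ℕ) (Bc : ℕ → S) {K : Type} [Field K] [Algebra k K]
    (φ : Polynomial S →ₐ[k] PowerSeries K) : Prop :=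
  φ (minPolyOf b Bc) = 0 ∧
  φ Polynomial.X ∈ tId K ∧ (∀ j, φ (Polynomial.C (zvar k d S j)) ∈ tId K) ∧
  φ Polynomial.X ≠ 0 ∧ (∀ j, φ (Polynomial.C (zvar k d S j)) ≠ 0)

/-- The order of the arc `φ`: `ord(φ) = min {α_0, α_1, …, α_d}`, where
`α_0 = ord_t φ(x)` and `α_j = ord_t φ(z_j)`. -/
def hypArcOrd {K : Type} [Field K] [Algebra k K]
    (φ : Polynomial S →ₐ[k] PowerSeries K) : ℕ :=
  sInf (insert (tOrd (φ Polynomial.X))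
    (Set.range fun j => tOrd (φ (Polynomial.C (zvar k d S j)))))

/-- The contact algebra `G^{(1)}_{X_0,φ}`: the Rees algebra over `K⟦t⟧` generated by
`t^{α_0} W` together with all `φ(g) W^l`, for `g W^l` a homogeneous element of `G_X^{(d)}`
with `φ(g) ≠ 0`. -/
def hypContact (D : Fin d → Derivation k S S) (b : ℕ) (Bc : ℕ → S)
    {K : Type} [Field K] [Algebra k K] (φ : Polynomial S →ₐ[k] PowerSeries K) :
    Subalgebra (PowerSeries K) (Polynomial (PowerSeries K)) :=
  Algebra.adjoin (PowerSeries K)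
    (insert
      (Polynomial.C ((PowerSeries.X : PowerSeries K) ^ tOrd (φ Polynomial.X)) * Polynomial.X)
      {p : Polynomial (PowerSeries K) | ∃ (g : S) (l : ℕ),
        (Polynomial.C g * Polynomial.X ^ l : Polynomial S) ∈ hypElim k d S D b Bc ∧
        φ (Polynomial.C g) ≠ 0 ∧
        p = Polynomial.C (φ (Polynomial.C g)) * Polynomial.X ^ l})


/-!
For a real slope `c ≥ 1`, the elements `f W ^ n` with `ν(f) ≥ c * n` span a subalgebra of `R[W]`
which is differentially closed: passing from `n + 1` to `n` relaxes the bound by `c ≥ 1`, while a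
derivation lowers the order by at most one. It therefore contains `Diff(M)` as soon as it contains
`M`. When all generators satisfy `ν(f) ≥ n`, their least slope `ν(f) / n` is such a `c`, and so it
is also the order of the closure.
-/

open scoped NNReal

section AdicOrder

variable {R : Type*} [CommRing R] {m : Ideal R}

lemma mem_pow_iff_le_adicOrder [IsHausdorff m R] {f : R} (hf : f ≠ 0) {n : ℕ} :
    f ∈ m ^ n ↔ n ≤ adicOrder m f := by
  have hbdd : BddAbove {n : ℕ | f ∈ m ^ n} := by
    contrapose! hf
    refine IsHausdorff.haus ‹_› f fun i => ?_
    obtain ⟨n, hn, hin⟩ := not_bddAbove_iff.1 hf i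
    simpa [SModEq.zero] using Ideal.pow_le_pow_right hin.le hn
  refine ⟨fun h => le_csSup hbdd h, fun h => Ideal.pow_le_pow_right h ?_⟩
  exact Nat.sSup_mem ⟨0, by simp⟩ hbdd

lemma coe_le_adicOrder_div_iff [IsHausdorff m R] {f : R} (hf : f ≠ 0) {n : ℕ} (hn : 1 ≤ n)
    (c : ℝ≥0) :
    (c : ℝ≥0∞) ≤ (adicOrder m f : ℝ≥0∞) / (n : ℝ≥0∞) ↔ f ∈ m ^ ⌈c * n⌉₊ := by
  rw [mem_pow_iff_le_adicOrder hf, Nat.ceil_le,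
    ENNReal.le_div_iff_mul_le (.inl (Nat.cast_ne_zero.2 (Nat.ne_of_gt hn)))
      (.inl (ENNReal.natCast_ne_top n))]
  norm_cast

lemma derivation_mem_pow {k : Type*} [CommRing k] [Algebra k R] (D : Derivation k R R) {n : ℕ}
    {f : R} (hf : f ∈ m ^ (n + 1)) : D f ∈ m ^ n := by
  induction n generalizing f with
  | zero => simp
  | succ n ih =>
    rw [pow_succ] at hf
    induction hf using Submodule.mul_induction_on' with
    | mem_mul_mem x hx y hy =>
      rw [D.leibniz, smul_eq_mul, smul_eq_mul, pow_succ]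
      refine add_mem ?_ (mul_comm y (D x) ▸ Ideal.mul_mem_mul (ih hx) hy)
      exact Ideal.mul_mem_right _ _ (pow_succ m n ▸ hx)
    | add x _ y _ hx hy => exact map_add D x y ▸ add_mem hx hy

end AdicOrder

section SlopeSubalgebra

variable {R : Type*} [CommRing R]

/-- The graded subalgebra `⊕ m ^ ⌈c * n⌉ W ^ n` of `R[W]`. When `R` is `m`-adically separated, its
nonzero homogeneous elements of degree `n ≥ 1` are the `f W ^ n` with `ν(f) / n ≥ c`, so that
comparing an order with `c` becomes an inclusion of subalgebras. -/
def slopeSubalgebra (m : Ideal R) (c : ℝ≥0) : Subalgebra R R[X] where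
  carrier := {p | ∀ n : ℕ, p.coeff n ∈ m ^ ⌈c * n⌉₊}
  mul_mem' {p q} hp hq n := by
    rw [coeff_mul]
    refine Ideal.sum_mem _ fun ⟨i, j⟩ hij => ?_
    obtain rfl : i + j = n := Finset.HasAntidiagonal.mem_antidiagonal.1 hij
    have hceil : ⌈c * (i + j : ℕ)⌉₊ ≤ ⌈c * i⌉₊ + ⌈c * j⌉₊ := by
      rw [Nat.cast_add, mul_add]
      exact Nat.ceil_add_le _ _
    refine Ideal.pow_le_pow_right hceil ?_
    rw [pow_add]
    exact Ideal.mul_mem_mul (hp i) (hq j)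
  add_mem' {p q} hp hq n := by
    rw [coeff_add]
    exact add_mem (hp n) (hq n)
  algebraMap_mem' r n := by
    rw [Polynomial.algebraMap_apply, Algebra.algebraMap_self_apply, coeff_C]
    split_ifs with hn
    · simp [hn]
    · exact zero_mem _

variable {m : Ideal R} {c : ℝ≥0}

lemma C_mul_X_pow_mem_slopeSubalgebra {f : R} {n : ℕ} :
    C f * X ^ n ∈ slopeSubalgebra m c ↔ f ∈ m ^ ⌈c * n⌉₊ := by
  refine ⟨fun h => by simpa using h n, fun h l => ?_⟩
  rw [coeff_C_mul_X_pow]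
  split_ifs with hl
  · rwa [hl]
  · exact zero_mem _

lemma graded_slopeSubalgebra (m : Ideal R) (c : ℝ≥0) : Graded (slopeSubalgebra m c) :=
  fun _ hp n => C_mul_X_pow_mem_slopeSubalgebra.2 (hp n)

lemma diffClosed_slopeSubalgebra {k ι : Type*} [CommRing k] [Algebra k R]
    (D : ι → Derivation k R R) (m : Ideal R) (hc : 1 ≤ c) :
    DiffClosed D (slopeSubalgebra m c) := by
  have hstep (l : ℕ) : ⌈c * l⌉₊ + 1 ≤ ⌈c * (l + 1 : ℕ)⌉₊ := by
    rw [← Nat.ceil_add_one (by positivity), Nat.cast_succ, mul_add_one]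
    gcongr
  simp only [DiffClosed, C_mul_X_pow_mem_slopeSubalgebra]
  refine ⟨fun f l _ hf => ?_, fun f l j hf => ?_⟩
  · exact Ideal.pow_le_pow_right (Nat.le_of_succ_le (hstep l)) hf
  · exact derivation_mem_pow (D j) (Ideal.pow_le_pow_right (hstep l) hf)

lemma coe_le_reesOrder [IsHausdorff m R] {G : Subalgebra R R[X]} (hG : G ≤ slopeSubalgebra m c) :
    (c : ℝ≥0∞) ≤ reesOrder m G := by
  refine le_sInf ?_
  rintro _ ⟨f, n, hf, hn, hfG, rfl⟩
  exact (coe_le_adicOrder_div_iff hf hn c).2 (C_mul_X_pow_mem_slopeSubalgebra.1 (hG hfG))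

end SlopeSubalgebra

section DiffClosure

variable {k R ι κ : Type*} [CommRing k] [CommRing R] [Algebra k R] (D : ι → Derivation k R R)

lemma subset_diffClosure (M : Set R[X]) : M ⊆ diffClosure D M :=
  fun _ hp => Algebra.mem_sInf.2 fun _ hG => hG.1 hp

lemma diffClosure_le_slopeSubalgebra {M : Set R[X]} {m : Ideal R} {c : ℝ≥0} (hc : 1 ≤ c)
    (hM : M ⊆ slopeSubalgebra m c) : diffClosure D M ≤ slopeSubalgebra m c :=
  sInf_le ⟨hM, graded_slopeSubalgebra m c, diffClosed_slopeSubalgebra D m hc⟩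

variable {m : Ideal R} [IsHausdorff m R] {s : Set κ} {f : κ → R} {n : κ → ℕ}

theorem reesOrder_diffClosure (hn : ∀ i ∈ s, 1 ≤ n i) (hf : ∀ i ∈ s, f i ∈ m ^ n i) :
    reesOrder m (diffClosure D {p | ∃ i ∈ s, p = C (f i) * X ^ n i}) =
      sInf {q : ℝ≥0∞ | ∃ i ∈ s, f i ≠ 0 ∧ q = (adicOrder m (f i) : ℝ≥0∞) / (n i : ℝ≥0∞)} := by
  refine le_antisymm (sInf_le_sInf ?_) (ENNReal.le_of_forall_nnreal_lt fun r hr => ?_)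
  · rintro _ ⟨i, hi, hfi, rfl⟩
    exact ⟨f i, n i, hfi, hn i hi, subset_diffClosure D _ ⟨i, hi, rfl⟩, rfl⟩
  have hgen : {p | ∃ i ∈ s, p = C (f i) * X ^ n i} ⊆ (slopeSubalgebra m (max r 1) : Set R[X]) := by
    rintro _ ⟨i, hi, rfl⟩
    obtain hfi | hfi := eq_or_ne (f i) 0
    · simp [hfi]
    refine C_mul_X_pow_mem_slopeSubalgebra.2 ((coe_le_adicOrder_div_iff hfi (hn i hi) _).1 ?_)
    rw [ENNReal.coe_max]
    refine max_le (hr.le.trans (sInf_le ⟨i, hi, hfi, rfl⟩)) ?_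
    rw [coe_le_adicOrder_div_iff hfi (hn i hi)]
    simpa using hf i hi
  calc (r : ℝ≥0∞) ≤ (max r 1 : ℝ≥0) := by exact_mod_cast le_max_left r 1
    _ ≤ reesOrder m _ := coe_le_reesOrder (diffClosure_le_slopeSubalgebra D (le_max_right r 1) hgen)

theorem order_of_hypersurface_elimination_algebra_general (hs : s.Finite)
    (hn : ∀ i ∈ s, 1 ≤ n i) (hf : ∀ i ∈ s, f i ∈ m ^ n i) (hnz : ∃ i ∈ s, f i ≠ 0) :
    IsLeast
      {q : ℝ≥0∞ | ∃ i ∈ s, f i ≠ 0 ∧ q = (adicOrder m (f i) : ℝ≥0∞) / (n i : ℝ≥0∞)}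
      (reesOrder m (diffClosure D {p | ∃ i ∈ s, p = C (f i) * X ^ n i})) := by
  rw [reesOrder_diffClosure D hn hf]
  refine ⟨Set.Nonempty.csInf_mem ?_ ?_, fun _ => sInf_le⟩
  · obtain ⟨i, hi, hfi⟩ := hnz
    exact ⟨_, i, hi, hfi, rfl⟩
  · refine (hs.image fun i => (adicOrder m (f i) : ℝ≥0∞) / (n i : ℝ≥0∞)).subset ?_
    rintro _ ⟨i, hi, -, rfl⟩
    exact Set.mem_image_of_mem _ hi

end DiffClosure

lemma isHausdorff_mS (k : Type) [Field k] (d : ℕ) (S : Type) [CommRing S]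
    [Algebra (MvPolynomial (Fin d) k) S] [IsSLoc k d S] : IsHausdorff (mS k d S) S := by
  have : IsLocalRing S := IsLocalization.AtPrime.isLocalRing S (mPoly k d)
  have : IsNoetherianRing S :=
    IsLocalization.isNoetherianRing (mPoly k d).primeCompl S inferInstance
  rw [mS, IsLocalization.AtPrime.map_eq_maximalIdeal]
  infer_instance

/-- (Lemma `lema:ord_algebra_eliminacion`.)  If `B_i ∈ m^{b-i}` for all `i`, not all zero,
then the order at the closed point of `G_X^{(d)} = Diff_S(S[B_{b-2} W^2, …, B_0 W^b])`
equals the minimum over the `i` with `B_i ≠ 0` of `ν(B_i)/(b-i)`. -/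
theorem order_of_hypersurface_elimination_algebra
    (k : Type) [Field k] [CharZero k] (d : ℕ) (hd : 1 ≤ d)
    (S : Type) [CommRing S] [IsDomain S] [Algebra (MvPolynomial (Fin d) k) S]
    [Algebra k S] [IsScalarTower k (MvPolynomial (Fin d) k) S] [IsSLoc k d S]
    (DS : Fin d → Derivation k S S)
    (hDS : ∀ i j : Fin d, DS j (zvar k d S i) = if i = j then 1 else 0)
    (b : ℕ) (hb : 2 ≤ b) (Bc : ℕ → S)
    (hmem : ∀ i ≤ b - 2, Bc i ∈ (mS k d S) ^ (b - i))
    (hnz : ∃ i ≤ b - 2, Bc i ≠ 0) :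
    IsLeast
      {q : ℝ≥0∞ | ∃ i, i ≤ b - 2 ∧ Bc i ≠ 0 ∧
        q = (adicOrder (mS k d S) (Bc i) : ℝ≥0∞) / ((b - i : ℕ) : ℝ≥0∞)}
      (reesOrder (mS k d S) (hypElim k d S DS b Bc)) := by
  have := isHausdorff_mS k d S
  exact order_of_hypersurface_elimination_algebra_general DS (Set.finite_Iic (b - 2))
    (fun i (hi : i ≤ b - 2) => by omega) hmem hnz

end NashMult
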